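/- Let v be quasi-definite with SMOP (P_n) and associated first-kind polynomials (P^{(1)}_n), let c ∈ ℂ, and let v̂ with (x−c)v̂ = v be quasi-definite with SMOP (P̂_n) (so v̂_0 ≠ 0 and v_0·P^{(1)}_{n−1}(c) + v̂_0·P_n(c) ≠ 0 for all n ≥ 1). Let P̂^{(1)}_{n−1}(x) = (1/v̂_0)⟨v̂_y, (P̂_n(x) − P̂_n(y))/(x−y)⟩ be the associated polynomials of the first kind of v̂, set S_n(x) = P_n(x) + (v_0/v̂_0)·P^{(1)}_{n−1}(x), and ℓ_n = −(v_0·P^{(1)}_{n−1}(c) + v̂_0·P_n(c))/(v_0·P^{(1)}_{n−2}(c) + v̂_0·P_{n−1}(c)). Then for all n ≥ 1: (x−c)·P̂^{(1)}_{n−1}(x) = S_n(x) + ℓ_n·S_{n−1}(x). -/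

import Mathlib

open Polynomial

noncomputable section

/-- Apply a linear functional (identified with its moment sequence) to a polynomial:
`⟨u, p⟩ = Σ_k c_k u_k` for `p = Σ_k c_k x^k`. -/
def fapply (u : ℕ → ℂ) (p : Polynomial ℂ) : ℂ := p.sum fun k ck => ck * u k

/-- `P` is the sequence of monic orthogonal polynomials (SMOP) of the functional `u`. -/
def IsSMOP (u : ℕ → ℂ) (P : ℕ → Polynomial ℂ) : Prop :=
  (∀ n, (P n).Monic) ∧ (∀ n, (P n).natDegree = n) ∧
    (∀ n m, n ≠ m → fapply u (P n * P m) = 0) ∧ (∀ n, fapply u (P n * P n) ≠ 0)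

/-- A functional is quasi-definite iff it admits a SMOP. -/
def IsQuasiDefinite (u : ℕ → ℂ) : Prop := ∃ P, IsSMOP u P

/-- Three term recurrence relation `x P_n = P_{n+1} + b_n P_n + a_n P_{n-1}`,
with `P_{-1} = 0`, `P_0 = 1`. -/
def HasTTRR (P : ℕ → Polynomial ℂ) (a b : ℕ → ℂ) : Prop :=
  P 0 = 1 ∧ X * P 0 = P 1 + C (b 0) * P 0 ∧
    ∀ n, 1 ≤ n → X * P n = P (n + 1) + C (b n) * P n + C (a n) * P (n - 1)

/-- Wronskian `W(p,q)(x) = p(x) q'(x) - p'(x) q(x)`. -/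
def Wr (p q : Polynomial ℂ) (x : ℂ) : ℂ :=
  p.eval x * (derivative q).eval x - (derivative p).eval x * q.eval x

/-- The monic Jacobi matrix with diagonal `b`, superdiagonal `1` and subdiagonal
entries `J_{n+1,n} = a_{n+1}`. -/
def jacobi (a b : ℕ → ℂ) (i j : ℕ) : ℂ :=
  if i = j then b i else if j = i + 1 then 1 else if i = j + 1 then a i else 0

/-- Entrywise product of semi-infinite (banded) matrices; the sum has finite support. -/
def mprod (A B : ℕ → ℕ → ℂ) (i j : ℕ) : ℂ := ∑' k, A i k * B k j

/-- `w` is the moment sequence of the inverse functional `u⁻¹`: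
the convolution of the moments of `u` and `w` is `(1,0,0,…)`. -/
def IsInverseMoments (u w : ℕ → ℂ) : Prop :=
  ∀ n, ∑ k ∈ Finset.range (n + 1), u k * w (n - k) = if n = 0 then 1 else 0

/-- Apply a functional `u` to the second (outer) variable `y` of a bivariate polynomial
`D = Σ_k q_k(x) y^k`, giving `Σ_k u_k q_k(x)`. -/
def fapplyY (u : ℕ → ℂ) (D : Polynomial (Polynomial ℂ)) : Polynomial ℂ :=
  D.sum fun k q => u k • q

/-- `P^{(1)}_{n-1}`, with the convention `P^{(1)}_{-1} = 0`. -/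
def P1prev (P1 : ℕ → Polynomial ℂ) (n : ℕ) : Polynomial ℂ :=
  if n = 0 then 0 else P1 (n - 1)

/-! Evaluating at `c` the relation
`(x - c) ⟨v̂_y, (p(x) - p(y))/(x - y)⟩ = v̂_0 p(x) - ⟨v̂, p⟩ + ⟨v_y, (p(x) - p(y))/(x - y)⟩`
computes `⟨v̂, p⟩`. For `p = P_n` the last term is `v_0 P^{(1)}_{n-1}`, so `ℓ_n` is exactly the
constant for which `Q = P_n + ℓ_n P_{n-1}` satisfies `⟨v̂, Q⟩ = 0`. Writing a polynomial of degree
less than `n` as `(x - c) s + r(c)` shows that such a `Q` is orthogonal to it for `v̂`; hence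
`Q = P̂_n`, and the relation applied to `p = Q` is the connection formula. -/

section MomentFunctional

variable {R : Type*} [CommRing R]

/-- The `A`-linear functional on `A[X]` with moment sequence `u : ℕ → R`. Taking `A = R` gives the
functional `u` itself, and `A = R[X]` gives `u` acting on the outer variable of `R[X][X]`. -/
def momentFunctional (A : Type*) [CommRing A] [Algebra R A] (u : ℕ → R) : A[X] →ₗ[A] A :=
  lsum fun k => u k • LinearMap.id

/-- `v̂` is a canonical Geronimus transformation of `v` at `c`: `(x - c) v̂ = v`. -/
def IsGeronimusTransform (c : R) (v vh : ℕ → R) : Prop :=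
  ∀ n, vh (n + 1) - c * vh n = v n

section Algebra

variable {A : Type*} [CommRing A] [Algebra R A] (u : ℕ → R)

@[simp]
lemma momentFunctional_monomial (n : ℕ) (r : A) :
    momentFunctional A u (monomial n r) = u n • r := by
  simp [momentFunctional, sum_monomial_index]

@[simp]
lemma momentFunctional_C (r : A) : momentFunctional A u (C r) = u 0 • r := by
  rw [← monomial_zero_left, momentFunctional_monomial]

@[simp]
lemma momentFunctional_one : momentFunctional A u 1 = algebraMap R A (u 0) := by
  rw [← C_1, momentFunctional_C, Algebra.algebraMap_eq_smul_one]

lemma momentFunctional_C_mul (r : A) (p : A[X]) :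
    momentFunctional A u (C r * p) = r * momentFunctional A u p := by
  rw [← smul_eq_C_mul, map_smul, smul_eq_mul]

lemma momentFunctional_map_algebraMap (p : R[X]) :
    momentFunctional A u (p.map (algebraMap R A)) = algebraMap R A (momentFunctional R u p) := by
  induction p using Polynomial.induction_on' with
  | add p q hp hq => simp only [Polynomial.map_add, map_add, hp, hq]
  | monomial n r => simp [Algebra.smul_def]

lemma IsGeronimusTransform.momentFunctional_X_sub_C_mul {c : R} {v vh : ℕ → R}
    (h : IsGeronimusTransform c v vh) (p : A[X]) :
    momentFunctional A vh ((X - C (algebraMap R A c)) * p) = momentFunctional A v p := by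
  induction p using Polynomial.induction_on' with
  | add p q hp hq => simp only [mul_add, map_add, hp, hq]
  | monomial n r =>
    rw [sub_mul, map_sub, X_mul_monomial, C_mul_monomial]
    simp only [momentFunctional_monomial, ← h n, Algebra.smul_def, map_sub, map_mul]
    ring

end Algebra

lemma X_sub_C_X_mul_injective :
    Function.Injective fun D : R[X][X] => (X - C X) * D :=
  (monic_X_sub_C X).isRegular.left

lemma X_sub_C_X_mul_map_C_divByMonic (p : R[X]) :
    (X - C X) * (p.map C /ₘ (X - C X)) = p.map C - C p := by
  rw [X_sub_C_mul_divByMonic_eq_sub_modByMonic, modByMonic_X_sub_C_eq_C_eval, eval_map, eval₂_C_X]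

/-- The divided difference `(p(x) - p(y)) / (x - y)`, with `y` as the outer variable. -/
def dividedDifference : R[X] →ₗ[R] R[X][X] where
  toFun p := p.map C /ₘ (X - C X)
  map_add' p q := X_sub_C_X_mul_injective <| by
    simp only [mul_add, X_sub_C_X_mul_map_C_divByMonic]
    rw [Polynomial.map_add, C_add]
    ring
  map_smul' r p := X_sub_C_X_mul_injective <| by
    simp only [mul_smul_comm, X_sub_C_X_mul_map_C_divByMonic, RingHom.id_apply]
    rw [smul_sub, smul_C, Polynomial.map_smul, ← algebraMap_smul R[X] r (p.map C), algebraMap_eq]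

lemma X_sub_C_X_mul_dividedDifference (p : R[X]) :
    (X - C X) * dividedDifference p = p.map C - C p :=
  X_sub_C_X_mul_map_C_divByMonic p

lemma eq_dividedDifference {p : R[X]} {D : R[X][X]} (hD : (C X - X) * D = C p - p.map C) :
    D = dividedDifference p :=
  X_sub_C_X_mul_injective <| by
    linear_combination -hD - X_sub_C_X_mul_dividedDifference p

@[simp]
lemma dividedDifference_C (r : R) : dividedDifference (C r) = 0 :=
  (eq_dividedDifference (by simp)).symm

lemma dividedDifference_X_mul (p : R[X]) :
    dividedDifference (X * p) = C X * dividedDifference p + p.map C := by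
  refine (eq_dividedDifference ?_).symm
  rw [C_mul, Polynomial.map_mul, map_X]
  linear_combination -C X * X_sub_C_X_mul_dividedDifference p

/-- The polynomial `⟨u_y, (p(x) - p(y)) / (x - y)⟩`. For `p = P_n` it is `u_0 P^{(1)}_{n-1}`: the
normalising factor `1 / u_0` is left out, so that the map is defined over any ring. -/
def associatedPolynomial (u : ℕ → R) : R[X] →ₗ[R] R[X] :=
  (momentFunctional R[X] u).restrictScalars R ∘ₗ dividedDifference

lemma associatedPolynomial_apply (u : ℕ → R) (p : R[X]) :
    associatedPolynomial u p = momentFunctional R[X] u (dividedDifference p) := rfl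

@[simp]
lemma associatedPolynomial_C (u : ℕ → R) (r : R) : associatedPolynomial u (C r) = 0 := by
  simp [associatedPolynomial_apply]

lemma associatedPolynomial_C_mul (u : ℕ → R) (r : R) (p : R[X]) :
    associatedPolynomial u (C r * p) = C r * associatedPolynomial u p := by
  simp only [← smul_eq_C_mul, map_smul]

lemma associatedPolynomial_X_mul (u : ℕ → R) (p : R[X]) :
    associatedPolynomial u (X * p) =
      X * associatedPolynomial u p + C (momentFunctional R u p) := by
  simp only [associatedPolynomial_apply, dividedDifference_X_mul, map_add, momentFunctional_C_mul]
  exact congrArg _ (momentFunctional_map_algebraMap u p)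

@[simp]
lemma associatedPolynomial_X (u : ℕ → R) : associatedPolynomial u X = C (u 0) := by
  rw [← mul_one X, associatedPolynomial_X_mul, ← C_1, associatedPolynomial_C]
  simp

namespace IsGeronimusTransform

variable {c : R} {v vh : ℕ → R}

lemma X_sub_C_mul_associatedPolynomial (h : IsGeronimusTransform c v vh) (p : R[X]) :
    (X - C c) * associatedPolynomial vh p =
      C (vh 0) * p - C (momentFunctional R vh p) + associatedPolynomial v p := by
  have hsplit : (X - C (C c)) * dividedDifference p =
      p.map C - C p + C (X - C c) * dividedDifference p := by
    rw [← X_sub_C_X_mul_dividedDifference, C_sub]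
    ring
  have hv : associatedPolynomial v p =
      momentFunctional R[X] vh ((X - C (C c)) * dividedDifference p) :=
    (h.momentFunctional_X_sub_C_mul _).symm
  have hmap : momentFunctional R[X] vh (p.map C) = C (momentFunctional R vh p) :=
    momentFunctional_map_algebraMap vh p
  rw [hv, hsplit, map_add, map_sub, hmap, momentFunctional_C, momentFunctional_C_mul,
    ← associatedPolynomial_apply, smul_eq_C_mul]
  ring

lemma momentFunctional_eq_eval (h : IsGeronimusTransform c v vh) (p : R[X]) :
    momentFunctional R vh p = (associatedPolynomial v p).eval c + vh 0 * p.eval c := by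
  have heval := congrArg (eval c) (h.X_sub_C_mul_associatedPolynomial p)
  simp only [eval_mul, eval_add, eval_sub, eval_X, eval_C, sub_self, zero_mul] at heval
  linear_combination heval

end IsGeronimusTransform

end MomentFunctional

lemma momentFunctional_eq_fapply (u : ℕ → ℂ) (p : ℂ[X]) : momentFunctional ℂ u p = fapply u p := by
  simp [momentFunctional, fapply, mul_comm]

lemma momentFunctional_eq_fapplyY (u : ℕ → ℂ) (D : ℂ[X][X]) :
    momentFunctional ℂ[X] u D = fapplyY u D := rfl

namespace IsSMOP

variable {u : ℕ → ℂ} {P : ℕ → ℂ[X]}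

lemma isMonicOfDegree (hP : IsSMOP u P) (n : ℕ) : IsMonicOfDegree (P n) n :=
  ⟨hP.2.1 n, hP.1 n⟩

/-- A SMOP as a polynomial sequence in the sense of Mathlib. -/
def toSequence (hP : IsSMOP u P) : Polynomial.Sequence ℂ where
  elems' := P
  degree_eq' n := by rw [degree_eq_natDegree (hP.1 n).ne_zero, hP.2.1 n]

lemma momentFunctional_mul_of_ne (hP : IsSMOP u P) {m n : ℕ} (hmn : m ≠ n) :
    momentFunctional ℂ u (P m * P n) = 0 := by
  rw [momentFunctional_eq_fapply, hP.2.2.1 m n hmn]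

lemma momentFunctional_mul_self_ne_zero (hP : IsSMOP u P) (n : ℕ) :
    momentFunctional ℂ u (P n * P n) ≠ 0 := by
  rw [momentFunctional_eq_fapply]
  exact hP.2.2.2 n

lemma momentFunctional_mul_of_mem_degreeLT (hP : IsSMOP u P) {n : ℕ} {q : ℂ[X]}
    (hq : q ∈ degreeLT ℂ n) : momentFunctional ℂ u (P n * q) = 0 := by
  have hspan : Submodule.span ℂ (P '' Set.Iio n) = degreeLT ℂ n :=
    hP.toSequence.span_degreeLT fun k _ => (hP.1 k).leadingCoeff ▸ isUnit_one
  have hle : degreeLT ℂ n ≤ LinearMap.ker (momentFunctional ℂ u ∘ₗ LinearMap.mulLeft ℂ (P n)) := by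
    rw [← hspan, Submodule.span_le]
    rintro _ ⟨k, hk, rfl⟩
    exact hP.momentFunctional_mul_of_ne (Set.mem_Iio.mp hk).ne'
  exact hle hq

lemma momentFunctional_mul_of_natDegree_le (hP : IsSMOP u P) {n : ℕ} {q : ℂ[X]}
    (hq : q.natDegree ≤ n) :
    momentFunctional ℂ u (P n * q) = q.coeff n * momentFunctional ℂ u (P n * P n) := by
  have hlower : q - C (q.coeff n) * P n ∈ degreeLT ℂ n := by
    rw [mem_degreeLT, degree_lt_iff_coeff_zero]
    intro k hk
    rcases hk.eq_or_lt with rfl | hk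
    · simp [((isMonicOfDegree_iff _ _).mp (hP.isMonicOfDegree n)).2]
    · simp [coeff_eq_zero_of_natDegree_lt (hq.trans_lt hk),
        coeff_eq_zero_of_natDegree_lt ((hP.2.1 n).trans_lt hk)]
  have hzero := hP.momentFunctional_mul_of_mem_degreeLT hlower
  rwa [mul_sub, mul_left_comm, map_sub, momentFunctional_C_mul, sub_eq_zero] at hzero

lemma eq_zero_of_orthogonal_degreeLT (hP : IsSMOP u P) {n : ℕ} {q : ℂ[X]} (hq : q ∈ degreeLT ℂ n)
    (horth : ∀ r ∈ degreeLT ℂ n, momentFunctional ℂ u (q * r) = 0) : q = 0 := by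
  by_contra hne
  have hlt : q.natDegree < n := (natDegree_lt_iff_degree_lt hne).mpr (mem_degreeLT.mp hq)
  have hmem : P q.natDegree ∈ degreeLT ℂ n := by
    rw [mem_degreeLT, ← natDegree_lt_iff_degree_lt (hP.1 _).ne_zero, hP.2.1]
    exact hlt
  have hlead := horth _ hmem
  rw [mul_comm, hP.momentFunctional_mul_of_natDegree_le le_rfl] at hlead
  exact mul_ne_zero (leadingCoeff_ne_zero.mpr hne) (hP.momentFunctional_mul_self_ne_zero _) hlead

lemma eq_of_isMonicOfDegree_of_orthogonal (hP : IsSMOP u P) {n : ℕ} {q : ℂ[X]}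
    (hq : IsMonicOfDegree q n)
    (horth : ∀ r ∈ degreeLT ℂ n, momentFunctional ℂ u (q * r) = 0) : P n = q := by
  have hmem : P n - q ∈ degreeLT ℂ n := by
    rw [mem_degreeLT, degree_lt_iff_coeff_zero]
    intro k hk
    rw [coeff_sub, (hP.isMonicOfDegree n).coeff_eq hq hk, sub_self]
  refine sub_eq_zero.mp (hP.eq_zero_of_orthogonal_degreeLT hmem fun r hr => ?_)
  rw [sub_mul, map_sub, hP.momentFunctional_mul_of_mem_degreeLT hr, horth r hr, sub_zero]

end IsSMOP

lemma exists_eq_X_sub_C_mul_add_C_eval {R : Type*} [CommRing R] [Nontrivial R] (c : R) {n : ℕ}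
    {r : R[X]} (hr : r ∈ degreeLT R (n + 1)) :
    ∃ s ∈ degreeLT R n, r = (X - C c) * s + C (r.eval c) := by
  refine ⟨r /ₘ (X - C c), ?_, ?_⟩
  · rw [degreeLT_succ_eq_degreeLE, mem_degreeLE] at hr
    rcases eq_or_ne r 0 with rfl | hr0
    · simp
    · have hlt := degree_divByMonic_lt r (X - C c) hr0 (by simp)
      exact mem_degreeLT.mpr (hlt.trans_le hr)
  · rw [X_sub_C_mul_divByMonic_eq_sub_modByMonic, modByMonic_X_sub_C_eq_C_eval, sub_add_cancel]

lemma IsSMOP.geronimusTransform_eq {c : ℂ} {v vh : ℕ → ℂ} {P Ph : ℕ → ℂ[X]} (hP : IsSMOP v P)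
    (hPh : IsSMOP vh Ph) (h : IsGeronimusTransform c v vh) {n : ℕ} {l : ℂ}
    (hl : momentFunctional ℂ vh (P (n + 1) + C l * P n) = 0) :
    Ph (n + 1) = P (n + 1) + C l * P n := by
  have hmonic : IsMonicOfDegree (P (n + 1) + C l * P n) (n + 1) :=
    (hP.isMonicOfDegree (n + 1)).add_right <|
      (natDegree_C_mul_le l (P n)).trans_lt ((hP.2.1 n).trans_lt n.lt_succ_self)
  refine hPh.eq_of_isMonicOfDegree_of_orthogonal hmonic fun r hr => ?_
  obtain ⟨s, hs, hrs⟩ := exists_eq_X_sub_C_mul_add_C_eval c hr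
  have hs' : s ∈ degreeLT ℂ (n + 1) := degreeLT_mono n.le_succ hs
  calc momentFunctional ℂ vh ((P (n + 1) + C l * P n) * r)
      = momentFunctional ℂ vh ((X - C c) * ((P (n + 1) + C l * P n) * s)
          + C (r.eval c) * (P (n + 1) + C l * P n)) := by
        congr 1
        linear_combination (P (n + 1) + C l * P n) * hrs
    _ = momentFunctional ℂ v (P (n + 1) * s + C l * (P n * s)) := by
        rw [map_add, momentFunctional_C_mul, hl, mul_zero, add_zero, add_mul, mul_assoc]
        exact h.momentFunctional_X_sub_C_mul _
    _ = 0 := by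
        rw [map_add, momentFunctional_C_mul, hP.momentFunctional_mul_of_mem_degreeLT hs,
          hP.momentFunctional_mul_of_mem_degreeLT hs', mul_zero, add_zero]

@[simp]
lemma P1prev_zero (Q : ℕ → ℂ[X]) : P1prev Q 0 = 0 := rfl

@[simp]
lemma P1prev_succ (Q : ℕ → ℂ[X]) (n : ℕ) : P1prev Q (n + 1) = Q n := rfl

namespace HasTTRR

variable {P Q : ℕ → ℂ[X]} {a b : ℕ → ℂ}

lemma apply_one (hP : HasTTRR P a b) : P 1 = X - C (b 0) := by
  have hrec := hP.2.1
  rw [hP.1, mul_one, mul_one] at hrec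
  exact eq_sub_of_add_eq hrec.symm

lemma apply_add_two (hP : HasTTRR P a b) (n : ℕ) :
    P (n + 2) = X * P (n + 1) - C (b (n + 1)) * P (n + 1) - C (a (n + 1)) * P n := by
  have hrec := hP.2.2 (n + 1) n.succ_pos
  rw [Nat.add_sub_cancel] at hrec
  linear_combination -hrec

lemma P1prev_add_two (hQ : HasTTRR Q (fun n => a (n + 1)) fun n => b (n + 1)) (n : ℕ) :
    P1prev Q (n + 2) = X * P1prev Q (n + 1) - C (b (n + 1)) * P1prev Q (n + 1) -
      C (a (n + 1)) * P1prev Q n := by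
  cases n with
  | zero => simp [hQ.apply_one, hQ.1]
  | succ n => exact hQ.apply_add_two n

end HasTTRR

lemma IsSMOP.associatedPolynomial_eq {v : ℕ → ℂ} {P P1 : ℕ → ℂ[X]} {a b : ℕ → ℂ}
    (hP : IsSMOP v P) (hrec : HasTTRR P a b)
    (hP1 : HasTTRR P1 (fun n => a (n + 1)) fun n => b (n + 1)) (n : ℕ) :
    associatedPolynomial v (P n) = C (v 0) * P1prev P1 n := by
  induction n using Nat.twoStepInduction with
  | zero => rw [hrec.1, ← C_1, associatedPolynomial_C, P1prev_zero, mul_zero]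
  | one => simp [hrec.apply_one, hP1.1]
  | more n ih ih' =>
    have hzero : momentFunctional ℂ v (P (n + 1)) = 0 := by
      simpa only [hrec.1, mul_one] using hP.momentFunctional_mul_of_ne n.succ_ne_zero
    rw [hrec.apply_add_two, map_sub, map_sub, associatedPolynomial_C_mul,
      associatedPolynomial_C_mul, associatedPolynomial_X_mul, hzero, ih, ih', hP1.P1prev_add_two,
      C_0]
    ring

/-- connection formula `(x-c) P̂^{(1)}_{n-1}(x) = S_n(x) + ℓ_n S_{n-1}(x)`
for `n ≥ 1`, where `S_n = P_n + (v_0/v̂_0) P^{(1)}_{n-1}` and `P̂^{(1)}_{n-1}` is defined by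
applying `v̂` to the second variable of the divided difference of `P̂_n`. -/
theorem stmt_16 (v : ℕ → ℂ) (c : ℂ) (P : ℕ → Polynomial ℂ) (hP : IsSMOP v P)
    (a b : ℕ → ℂ) (hrec : HasTTRR P a b) (ha : ∀ n, 1 ≤ n → a n ≠ 0)
    (P1 : ℕ → Polynomial ℂ)
    (hP1 : HasTTRR P1 (fun n => a (n + 1)) (fun n => b (n + 1)))
    (vh : ℕ → ℂ) (hger : ∀ n, vh (n + 1) - c * vh n = v n) (hvh0 : vh 0 ≠ 0)
    (hcond : ∀ n, 1 ≤ n → v 0 * (P1 (n - 1)).eval c + vh 0 * (P n).eval c ≠ 0)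
    (Ph : ℕ → Polynomial ℂ) (hPh : IsSMOP vh Ph)
    (Dh : ℕ → Polynomial (Polynomial ℂ))
    (hDh : ∀ n, 1 ≤ n →
      (Polynomial.C Polynomial.X - Polynomial.X) * Dh n
        = Polynomial.C (Ph n) - (Ph n).map Polynomial.C)
    (S : ℕ → Polynomial ℂ)
    (hS : ∀ n, S n = P n + C (v 0 / vh 0) * P1prev P1 n)
    (ell : ℕ → ℂ)
    (hell : ∀ n, 1 ≤ n → ell n =
      -(v 0 * (P1prev P1 n).eval c + vh 0 * (P n).eval c)
        / (v 0 * (P1prev P1 (n - 1)).eval c + vh 0 * (P (n - 1)).eval c)) :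
    ∀ n, 1 ≤ n →
      (X - C c) * ((vh 0)⁻¹ • fapplyY vh (Dh n)) = S n + C (ell n) * S (n - 1) := by
  intro n hn
  obtain ⟨n, rfl⟩ := Nat.exists_eq_add_of_le' hn
  have hG : IsGeronimusTransform c v vh := hger
  have hA := hP.associatedPolynomial_eq hrec hP1
  have hmoment (k : ℕ) : momentFunctional ℂ vh (P k) =
      v 0 * (P1prev P1 k).eval c + vh 0 * (P k).eval c := by
    rw [hG.momentFunctional_eq_eval, hA, eval_mul, eval_C]
  have hne : momentFunctional ℂ vh (P n) ≠ 0 := by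
    rw [hmoment]
    cases n with
    | zero => simpa [hrec.1] using hvh0
    | succ n => exact hcond (n + 1) n.succ_pos
  have hQ : momentFunctional ℂ vh (P (n + 1) + C (ell (n + 1)) * P n) = 0 := by
    rw [map_add, momentFunctional_C_mul, hell _ hn, Nat.add_sub_cancel, ← hmoment, ← hmoment,
      div_mul_cancel₀ _ hne, add_neg_cancel]
  have hPh_eq := hP.geronimusTransform_eq hPh hG hQ
  have hS_eq (k : ℕ) : C (vh 0) * S k = C (vh 0) * P k + associatedPolynomial v (P k) := by
    rw [hS, hA, mul_add, ← mul_assoc, ← C_mul, mul_div_cancel₀ _ hvh0]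
  rw [eq_dividedDifference (hDh _ hn), ← momentFunctional_eq_fapplyY, ← associatedPolynomial_apply,
    mul_smul_comm, inv_smul_eq_iff₀ hvh0, hG.X_sub_C_mul_associatedPolynomial, hPh_eq, hQ, map_add,
    associatedPolynomial_C_mul, smul_eq_C_mul, Nat.add_sub_cancel, C_0]
  linear_combination -hS_eq (n + 1) - C (ell (n + 1)) * hS_eq n
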